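/- Let m ≥ 2 and let k = (k_0, k_1, ...) be positive integers with m coprime to (k_0-1)! and to k_j! for every j ≥ 1. Let n ≥ 1 be divisible by m, with base-m representation n = d_s m^s + ... + d_t m^t where 1 ≤ s ≤ t, 1 ≤ d_s ≤ m-1, and 0 ≤ d_{s+1}, ..., d_t ≤ m-1. Then for every d_0 with 0 ≤ d_0 ≤ m-1, the number c_m^k(n - d_0) of k-coloured m-ary partitions of n - d_0 without gaps satisfies c_m^k(n - d_0) ≡ C(k_0-1+m-d_0, k_0-1) · ( ε_s + (-1)^{s-1} (C(k_s+d_s-1, k_s) - 1) · ∑_{i=s}^{t} ∏_{j=s+1}^{i} (C(k_j+d_j, k_j) - 1) ) (mod m), where ε_s = 0 if s is even and ε_s = 1 if s is odd. (The paper writes the first factor as the generalized binomial coefficient C(k_0-1-d_0, k_0-1), which is congruent to C(k_0-1+m-d_0, k_0-1) modulo m.) -/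

import Mathlib

/-!
Write `F k n` for the number of gap-free partitions of `n` with colours `k` (so `F k 0 = 1`), `k'`
for the shifted sequence `j ↦ k (j + 1)`, and `S k N = F k 0 + ⋯ + F k (N - 1)`.

A gap-free partition of a positive number contains a part `1`. Removing all parts `1` from one of
`m * M - e`, where `0 ≤ e < m`, leaves `m` times a gap-free partition, for the colours `k'`, of
some `i < M`, and every such `i` occurs (`gapFreeEquiv`). The parts `1` then contribute the factor
`C(k₀ - 1 + m * (M - i) - e, k₀ - 1)`, which modulo `m` does not depend on `i` because `(k₀ - 1)!`
is a unit. Hence `F k (m * M - e) ≡ C(k₀ - 1 + m - e, k₀ - 1) * S k' M` (`gfCount_mod`).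

If also `k₀!` is a unit modulo `m`, summing this over the values of `e` with the hockey-stick
identity shows that complete blocks of length `m` cancel, and
`S k (m * N + 1 + r) ≡ 1 + (C(k₀ + r, k₀) - 1) * S k' (N + 1)` for `0 ≤ r ≤ m` (`gfSum_step`).
For `r = m - 1` this reads `S k (m * (N + 1)) ≡ 1 - S k' (N + 1)`, which disposes of the zero
digits of `n` below `d_s` and produces the sign and `ε_s` (`gfSum_pow_mul`). The digit `d_s` uses
`r = d_s - 1`, and each higher digit `d_j` uses `r = d_j`, producing the sum of products
(`gfSum_digits`).
-/

open Finset

/-- A `k`-coloured `m`-ary partition of `n`: a finitely supported function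
`c : ℕ × ℕ →₀ ℕ`, where `c (j, i)` is the multiplicity of the part `m^j` in colour `i`,
with `c (j, i) = 0` whenever `i ≥ k j`, and total sum `∑ c (j, i) · m^j = n`. -/
def IsColouredMaryPartition (m : ℕ) (k : ℕ → ℕ) (n : ℕ) (c : ℕ × ℕ →₀ ℕ) : Prop :=
  (∀ j i, k j ≤ i → c (j, i) = 0) ∧ c.sum (fun p v => v * m ^ p.1) = n

/-- A coloured `m`-ary partition is *without gaps* if whenever a part `m^{j+1}` occurs
in some colour, a part `m^j` occurs in some (not necessarily the same) colour. -/
def WithoutGaps (c : ℕ × ℕ →₀ ℕ) : Prop :=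
  ∀ j : ℕ, (∃ i, 0 < c (j + 1, i)) → ∃ i', 0 < c (j, i')

/-- `c` is a `k`-coloured `m`-ary partition of `n` without gaps. -/
def IsGapFree (m : ℕ) (k : ℕ → ℕ) (n : ℕ) (c : ℕ × ℕ →₀ ℕ) : Prop :=
  IsColouredMaryPartition m k n c ∧ WithoutGaps c

/-- The number being partitioned by `c`. -/
noncomputable def weight (m : ℕ) (c : ℕ × ℕ →₀ ℕ) : ℕ := c.sum (fun p v => v * m ^ p.1)

/-- The number of gap-free partitions of `n`; it is `1` at `n = 0`, for the empty partition. -/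
noncomputable def gfCount (m : ℕ) (k : ℕ → ℕ) (n : ℕ) : ℕ :=
  Nat.card {c : ℕ × ℕ →₀ ℕ // IsGapFree m k n c}

/-- The partial sum of `gfCount` over `0, …, N - 1`, taken modulo `m`. -/
noncomputable def gfSum (m : ℕ) (k : ℕ → ℕ) (N : ℕ) : ZMod m :=
  ∑ i ∈ range N, (gfCount m k i : ZMod m)

/-- Separates the row `j = 0` of `ℕ × ℕ` from the rows `j ≥ 1`, the latter reindexed by `j - 1`. -/
def rowEquiv : ℕ ⊕ ℕ × ℕ ≃ ℕ × ℕ where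
  toFun := Sum.elim (fun i => (0, i)) (fun p => (p.1 + 1, p.2))
  invFun p := match p with
    | (0, i) => Sum.inl i
    | (j + 1, i) => Sum.inr (j, i)
  left_inv := by rintro (i | ⟨j, i⟩) <;> rfl
  right_inv := by rintro ⟨_ | j, i⟩ <;> rfl

/-- A coloured partition is the same as the multiplicities `a` of its parts `1` together with a
coloured partition `c` for the shifted colours: each part `m ^ j` of `c` becomes `m ^ (j + 1)`. -/
noncomputable def glue : (ℕ →₀ ℕ) × (ℕ × ℕ →₀ ℕ) ≃ (ℕ × ℕ →₀ ℕ) :=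
  Finsupp.sumFinsuppEquivProdFinsupp.symm.trans (Finsupp.equivCongrLeft rowEquiv)

@[simp] lemma glue_zero (p : (ℕ →₀ ℕ) × (ℕ × ℕ →₀ ℕ)) (i : ℕ) : glue p (0, i) = p.1 i := rfl

@[simp] lemma glue_succ (p : (ℕ →₀ ℕ) × (ℕ × ℕ →₀ ℕ)) (j i : ℕ) :
    glue p (j + 1, i) = p.2 (j, i) := rfl

lemma weight_glue (m : ℕ) (a : ℕ →₀ ℕ) (c : ℕ × ℕ →₀ ℕ) :
    weight m (glue (a, c)) = a.sum (fun _ v => v) + m * weight m c := by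
  have h : glue (a, c) = Finsupp.equivMapDomain rowEquiv (Finsupp.sumElim a c) := rfl
  rw [weight, h, Finsupp.equivMapDomain_eq_mapDomain, Finsupp.sum_mapDomain_index_inj
    rowEquiv.injective, Finsupp.sum_sumElim, weight, Finsupp.mul_sum]
  congr 1
  · apply Finsupp.sum_congr
    intro i _
    simp [rowEquiv]
  · apply Finsupp.sum_congr
    intro p _
    simp only [rowEquiv, Equiv.coe_fn_mk, Function.comp, Sum.elim_inr, pow_succ]
    ring

/-- In a gap-free partition of a positive number a part `1` must occur; conversely, once a part `1`
occurs the remaining condition is that the larger parts have no gaps among themselves. -/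
lemma isGapFree_glue_iff {m : ℕ} {k : ℕ → ℕ} {n : ℕ} (hn : 0 < n)
    (a : ℕ →₀ ℕ) (c : ℕ × ℕ →₀ ℕ) :
    IsGapFree m k n (glue (a, c)) ↔
      a.support ⊆ range (k 0) ∧ 0 < a.sum (fun _ v => v) ∧
      a.sum (fun _ v => v) + m * weight m c = n ∧
      IsGapFree m (fun j => k (j + 1)) (weight m c) c := by
  have hpos : 0 < a.sum (fun _ v => v) ↔ ∃ i, 0 < a i := by
    rw [Finsupp.sum, Finset.sum_pos_iff]
    constructor
    · rintro ⟨i, _, h⟩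
      exact ⟨i, h⟩
    · rintro ⟨i, h⟩
      exact ⟨i, by simpa using h.ne', h⟩
  have hsupp : a.support ⊆ range (k 0) ↔ ∀ i, k 0 ≤ i → a i = 0 := by
    constructor
    · intro h i hi
      by_contra h'
      have := mem_range.1 (h (Finsupp.mem_support_iff.2 h'))
      omega
    · intro h i hi
      by_contra h'
      exact (Finsupp.mem_support_iff.1 hi) (h i (by simpa using h'))
  have hw := weight_glue m a c
  rw [hpos, hsupp]
  constructor
  · rintro ⟨⟨hcol, hsum⟩, hgap⟩
    change weight m _ = n at hsum
    have hgap' : WithoutGaps c := fun j h => hgap (j + 1) h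
    refine ⟨fun i hi => hcol 0 i hi, ?_, by omega, ⟨fun j i h => hcol (j + 1) i h, rfl⟩, hgap'⟩
    by_contra hno
    push Not at hno
    have hz : ∀ j i, glue (a, c) (j, i) = 0 := by
      intro j
      induction j with
      | zero => intro i; simpa using hno i
      | succ j ih =>
        intro i
        by_contra h
        obtain ⟨i', h'⟩ := hgap j ⟨i, Nat.pos_of_ne_zero h⟩
        exact h'.ne' (ih i')
    have h0 : glue (a, c) = 0 := by
      ext ⟨j, i⟩
      exact hz j i
    rw [h0] at hsum
    simp [weight] at hsum
    omega
  · rintro ⟨h1, h2, h3, ⟨h4, -⟩, h5⟩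
    refine ⟨⟨?_, by change weight m _ = n; omega⟩, ?_⟩
    · rintro (_ | j) i h
      · exact h1 i h
      · exact h4 j i h
    · rintro (_ | j) h
      · exact h2
      · exact h5 j h

/-- Removing the parts `1`: with `n = m * M - e`, the larger parts form `m` times a gap-free
partition of some `i < M`, and the parts `1` make up the positive remainder. -/
noncomputable def gapFreeEquiv (m : ℕ) (k : ℕ → ℕ) (M e : ℕ) (hM : 0 < M) (he : e < m) :
    (Σ i : Fin M, {a // a ∈ finsuppAntidiag (range (k 0)) (m * (M - i) - e)} ×
      {c // IsGapFree m (fun j => k (j + 1)) i c}) ≃ {c // IsGapFree m k (m * M - e) c} := by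
  have key : ∀ i : ℕ, i < M → m ≤ m * (M - i) ∧ m * (M - i) + m * i = m * M := by
    intro i hi
    refine ⟨Nat.le_mul_of_pos_right _ (by omega), ?_⟩
    rw [← Nat.mul_add, Nat.sub_add_cancel hi.le]
  have hpos : 0 < m * M - e := by
    have := key 0 hM
    simp only [Nat.sub_zero] at this
    omega
  refine Equiv.ofBijective (fun x => ⟨glue (x.2.1.1, x.2.2.1), ?_⟩) ⟨?_, ?_⟩
  · obtain ⟨i, ⟨a, ha⟩, ⟨c, hc⟩⟩ := x
    rw [mem_finsuppAntidiag'] at ha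
    have hw : weight m c = i := hc.1.2
    have := key i i.2
    rw [isGapFree_glue_iff hpos]
    refine ⟨ha.2, ?_, ?_, by rw [hw]; exact hc⟩
    · simp only [ha.1]; omega
    · simp only [ha.1, hw]; omega
  · rintro ⟨i, ⟨a, ha⟩, ⟨c, hc⟩⟩ ⟨i', ⟨a', ha'⟩, ⟨c', hc'⟩⟩ h
    have h1 := glue.injective (Subtype.ext_iff.1 h)
    obtain ⟨rfl, rfl⟩ := Prod.ext_iff.1 h1
    have : i = i' := Fin.ext (hc.1.2.symm.trans hc'.1.2)
    subst this
    rfl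
  · rintro ⟨c, hc⟩
    obtain ⟨⟨a, c0⟩, rfl⟩ := glue.surjective c
    have hc' := hc
    rw [isGapFree_glue_iff hpos] at hc'
    obtain ⟨h1, h2, h3, h4⟩ := hc'
    have hlt : weight m c0 < M := by
      have : m * weight m c0 < m * M := by omega
      exact Nat.lt_of_mul_lt_mul_left this
    have := key _ hlt
    refine ⟨⟨⟨weight m c0, hlt⟩, ⟨a, ?_⟩, ⟨c0, h4⟩⟩, rfl⟩
    rw [mem_finsuppAntidiag']
    refine ⟨?_, h1⟩
    change a.sum (fun _ v => v) = m * (M - weight m c0) - e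
    omega

lemma isGapFree_zero_iff {m : ℕ} (hm : 2 ≤ m) (k : ℕ → ℕ) (c : ℕ × ℕ →₀ ℕ) :
    IsGapFree m k 0 c ↔ c = 0 := by
  constructor
  · rintro ⟨⟨-, h⟩, -⟩
    ext p
    by_contra hp
    rw [Finsupp.sum, Finset.sum_eq_zero_iff] at h
    have := h p (Finsupp.mem_support_iff.2 hp)
    rw [mul_eq_zero] at this
    rcases this with h | h
    · exact hp h
    · have := Nat.pow_pos (n := p.1) (show 0 < m by omega)
      omega
  · rintro rfl
    exact ⟨⟨by simp, by simp⟩, fun j h => by simp at h⟩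

lemma gfCount_zero {m : ℕ} (hm : 2 ≤ m) (k : ℕ → ℕ) : gfCount m k 0 = 1 := by
  rw [gfCount, Nat.card_congr (Equiv.subtypeEquivRight (isGapFree_zero_iff hm k))]
  simp

lemma finite_isGapFree {m : ℕ} (hm : 2 ≤ m) (n : ℕ) :
    ∀ k : ℕ → ℕ, Finite {c // IsGapFree m k n c} := by
  induction n using Nat.strong_induction_on with
  | _ n ih =>
    intro k
    rcases Nat.eq_zero_or_pos n with rfl | hn
    · exact Finite.of_equiv _ (Equiv.subtypeEquivRight (isGapFree_zero_iff hm k)).symm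
    -- Every `n ≥ 1` is `m * M - e` with `M = ⌈n / m⌉ ≤ n` and `0 ≤ e < m`.
    obtain ⟨q, e, he, hq, rfl⟩ : ∃ q e, e < m ∧ q < n ∧ n = m * (q + 1) - e := by
      have hdm := Nat.div_add_mod (n - 1) m
      have hml := Nat.mod_lt (n - 1) (show 0 < m by omega)
      have hdl := Nat.div_le_self (n - 1) m
      refine ⟨(n - 1) / m, m - 1 - (n - 1) % m, by omega, by omega, ?_⟩
      rw [mul_add]
      omega
    have : ∀ i : Fin (q + 1), Finite {c // IsGapFree m (fun j => k (j + 1)) i c} :=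
      fun i => ih i (by have := i.2; omega) _
    exact Finite.of_equiv _ (gapFreeEquiv m k (q + 1) e (by omega) he)

lemma gfCount_rec {m : ℕ} (hm : 2 ≤ m) (k : ℕ → ℕ) (M e : ℕ) (hM : 0 < M) (he : e < m) :
    gfCount m k (m * M - e) = ∑ i ∈ range M,
      (k 0).multichoose (m * (M - i) - e) * gfCount m (fun j => k (j + 1)) i := by
  have := fun i : Fin M => finite_isGapFree hm i (fun j => k (j + 1))
  rw [gfCount, ← Nat.card_congr (gapFreeEquiv m k M e hM he), Nat.card_sigma, Finset.sum_range]
  refine Finset.sum_congr rfl fun i _ => ?_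
  rw [Nat.card_prod, gfCount, Nat.card_eq_fintype_card, Fintype.card_coe,
    card_finsuppAntidiag_nat_eq_multichoose, card_range]

/-- `x ↦ C(x, K)` is periodic modulo `m` when `K!` is invertible modulo `m`, since
`K! * C(x, K)` is the value at `x` of a polynomial with integer coefficients. -/
lemma choose_periodic {m K : ℕ} (h : Nat.Coprime m K.factorial) (x y : ℕ)
    (hxy : (x : ZMod m) = y) : (x.choose K : ZMod m) = y.choose K := by
  have hu : IsUnit (K.factorial : ZMod m) := (ZMod.isUnit_iff_coprime _ _).2 h.symm
  apply hu.mul_left_cancel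
  rw [← Nat.cast_mul, ← Nat.cast_mul, ← Nat.descFactorial_eq_factorial_mul_choose,
    ← Nat.descFactorial_eq_factorial_mul_choose, ← descPochhammer_eval_eq_descFactorial,
    ← descPochhammer_eval_eq_descFactorial, hxy]

/-- The recursion modulo `m`: by periodicity all coefficients in `gfCount_rec` agree. -/
lemma gfCount_mod {m : ℕ} (hm : 2 ≤ m) (k : ℕ → ℕ) (hk : 0 < k 0)
    (h : Nat.Coprime m (k 0 - 1).factorial) (M e : ℕ) (hM : 0 < M) (he : e < m) :
    (gfCount m k (m * M - e) : ZMod m) =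
      ((k 0 - 1 + (m - e)).choose (k 0 - 1) : ZMod m) * gfSum m (fun j => k (j + 1)) M := by
  rw [gfCount_rec hm k M e hM he, gfSum, Finset.mul_sum, Nat.cast_sum]
  refine Finset.sum_congr rfl fun i hi => ?_
  rw [mem_range] at hi
  rw [Nat.cast_mul, Nat.multichoose_eq]
  congr 1
  obtain ⟨u, hu⟩ : ∃ u, M - i = u + 1 := ⟨M - i - 1, by omega⟩
  have hmu : m * (u + 1) = m * u + m := by ring
  rw [hu, Nat.choose_symm_of_eq_add (b := k 0 - 1) (by omega)]
  apply choose_periodic h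
  have : k 0 + (m * (u + 1) - e) - 1 = m * u + (k 0 - 1 + (m - e)) := by omega
  rw [this]
  push_cast
  simp

/-- `gfSum` in the block of length `m` after `m * N + 1`; the binomial coefficients add up by the
hockey-stick identity. -/
lemma gfSum_block {m : ℕ} (hm : 2 ≤ m) (k : ℕ → ℕ) (hk : 0 < k 0)
    (h : Nat.Coprime m (k 0 - 1).factorial) (N r : ℕ) (hr : r ≤ m) :
    gfSum m k (m * N + 1 + r) = gfSum m k (m * N + 1) +
      (((k 0 + r).choose (k 0) : ZMod m) - 1) * gfSum m (fun j => k (j + 1)) (N + 1) := by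
  induction r with
  | zero => simp
  | succ r ih =>
    have h1 : gfSum m k (m * N + 1 + (r + 1)) =
        gfSum m k (m * N + 1 + r) + gfCount m k (m * N + 1 + r) := Finset.sum_range_succ _ _
    have hmN : m * (N + 1) = m * N + m := by ring
    have h2 : m * N + 1 + r = m * (N + 1) - (m - 1 - r) := by omega
    rw [h1, ih (by omega), h2, gfCount_mod hm k hk h _ _ (by omega) (by omega)]
    obtain ⟨K, hK⟩ : ∃ K, k 0 = K + 1 := ⟨k 0 - 1, by omega⟩
    have h3 : K + (m - (m - 1 - r)) = K + 1 + r := by omega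
    have h4 : (K + 1 + (r + 1)).choose (K + 1) =
        (K + 1 + r).choose K + (K + 1 + r).choose (K + 1) := by
      rw [← add_assoc, Nat.choose_succ_succ]
    rw [hK, Nat.add_sub_cancel, h3, h4]
    push_cast
    ring

/-- A complete block of length `m` contributes a multiple of `C(k₀ + m, k₀) - 1 ≡ 0`. -/
lemma gfSum_mul_add_one {m : ℕ} (hm : 2 ≤ m) (k : ℕ → ℕ) (hk : 0 < k 0)
    (h : Nat.Coprime m (k 0).factorial) (N : ℕ) : gfSum m k (m * N + 1) = 1 := by
  have h' : Nat.Coprime m (k 0 - 1).factorial :=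
    h.coprime_dvd_right (Nat.factorial_dvd_factorial (by omega))
  induction N with
  | zero => simp [gfSum, gfCount_zero hm]
  | succ N ih =>
    have h1 : m * (N + 1) + 1 = m * N + 1 + m := by ring
    rw [h1, gfSum_block hm k hk h' N m le_rfl, ih,
      choose_periodic h (k 0 + m) (k 0) (by simp)]
    simp

/-- Recursion for `gfSum`; each positive argument is `m * N + 1 + r` for some `N` and `r < m`. -/
lemma gfSum_step {m : ℕ} (hm : 2 ≤ m) (k : ℕ → ℕ) (hk : 0 < k 0)
    (h : Nat.Coprime m (k 0).factorial) (N r : ℕ) (hr : r ≤ m) :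
    gfSum m k (m * N + 1 + r) = 1 +
      (((k 0 + r).choose (k 0) : ZMod m) - 1) * gfSum m (fun j => k (j + 1)) (N + 1) := by
  rw [gfSum_block hm k hk (h.coprime_dvd_right (Nat.factorial_dvd_factorial (by omega))) N r hr,
    gfSum_mul_add_one hm k hk h]

lemma gfSum_mul {m : ℕ} (hm : 2 ≤ m) (k : ℕ → ℕ) (hk : 0 < k 0)
    (h : Nat.Coprime m (k 0).factorial) (N : ℕ) (hN : 0 < N) :
    gfSum m k (m * N) = 1 - gfSum m (fun j => k (j + 1)) N := by
  obtain ⟨N, rfl⟩ : ∃ M, N = M + 1 := ⟨N - 1, by omega⟩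
  have h1 : m * (N + 1) = m * N + 1 + (m - 1) := by rw [mul_add]; omega
  rw [h1, gfSum_step hm k hk h N (m - 1) (by omega), choose_periodic h (k 0 + (m - 1)) (k 0 - 1),
    Nat.choose_eq_zero_of_lt (by omega)]
  · push_cast
    ring
  · rw [show k 0 + (m - 1) = k 0 - 1 + m by omega]
    push_cast
    simp

/-- Trailing zeros of the argument of `gfSum`. -/
lemma gfSum_pow_mul {m : ℕ} (hm : 2 ≤ m) (N : ℕ) (hN : 0 < N) (a : ℕ) :
    ∀ k : ℕ → ℕ, (∀ j, 0 < k j) → (∀ j, Nat.Coprime m (k j).factorial) →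
      gfSum m k (m ^ a * N) =
        (if Even a then 0 else 1) + (-1) ^ a * gfSum m (fun j => k (j + a)) N := by
  induction a with
  | zero => intro k _ _; simp
  | succ a ih =>
    intro k hk h
    have h1 : m ^ (a + 1) * N = m * (m ^ a * N) := by ring
    rw [h1, gfSum_mul hm k (hk 0) (h 0) _ (by positivity),
      ih (fun j => k (j + 1)) (fun j => hk _) (fun j => h _)]
    have h2 : (fun j => k (j + a + 1)) = fun j => k (j + (a + 1)) := rfl
    simp only [h2, Nat.even_add_one]
    split_ifs <;> ring

/-- The value of `gfSum` at one more than a number given by its base-`m` digits. -/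
lemma gfSum_digits {m : ℕ} (hm : 2 ≤ m) (r : ℕ) :
    ∀ (k d : ℕ → ℕ), (∀ j, 0 < k j) → (∀ j, Nat.Coprime m (k j).factorial) →
      (∀ j, j < r → d j ≤ m - 1) →
      gfSum m k (∑ j ∈ range r, d j * m ^ j + 1) = ∑ i ∈ range (r + 1), ∏ j ∈ range i,
        (((k j + d j).choose (k j) : ZMod m) - 1) := by
  induction r with
  | zero => intro k d _ _ _; simp [gfSum, gfCount_zero hm]
  | succ r ih =>
    intro k d hk h hd
    have h1 : ∑ j ∈ range (r + 1), d j * m ^ j + 1 =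
        m * (∑ j ∈ range r, d (j + 1) * m ^ j) + 1 + d 0 := by
      rw [Finset.sum_range_succ', Finset.mul_sum]
      have : ∀ j ∈ range r, d (j + 1) * m ^ (j + 1) = m * (d (j + 1) * m ^ j) :=
        fun j _ => by ring
      rw [Finset.sum_congr rfl this]
      ring
    have hd0 := hd 0 (by omega)
    rw [h1, gfSum_step hm k (hk 0) (h 0) _ _ (by omega),
      ih (fun j => k (j + 1)) (fun j => d (j + 1)) (fun j => hk _) (fun j => h _)
        (fun j hj => hd _ (by omega)),
      Finset.sum_range_succ' _ (r + 1), Finset.mul_sum]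
    simp only [Finset.prod_range_succ', Finset.prod_range_zero]
    rw [add_comm]
    congr 1
    exact Finset.sum_congr rfl fun i _ => mul_comm _ _

/-- **Corollary 5 of the paper.**  Let `m ≥ 2` and `k₀, k₁, …` be positive
integers with `m` coprime to `(k₀-1)!` and to `k_j!` for `j ≥ 1`.  Let `n ≥ 1` be divisible
by `m`, with base-`m` representation `n = d_s m^s + ⋯ + d_t m^t` where `1 ≤ s ≤ t`,
`1 ≤ d_s ≤ m-1` and `0 ≤ d_j ≤ m-1` for `s+1 ≤ j ≤ t`.  Then for all `0 ≤ d₀ ≤ m-1`,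
`c_m^k(n - d₀) ≡ C(k₀-1+m-d₀, k₀-1) · (ε_s + (-1)^{s-1} (C(k_s+d_s-1, k_s) - 1)
  · ∑_{i=s}^{t} ∏_{j=s+1}^{i} (C(k_j+d_j, k_j) - 1)) (mod m)`,
where `ε_s = 0` for even `s` and `ε_s = 1` for odd `s`. -/
theorem gapfree_count_mod (m : ℕ) (hm : 2 ≤ m) (k : ℕ → ℕ) (hk : ∀ j, 0 < k j)
    (h0 : Nat.Coprime m (Nat.factorial (k 0 - 1)))
    (hj : ∀ j, 1 ≤ j → Nat.Coprime m (Nat.factorial (k j)))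
    (n s t : ℕ) (hs : 1 ≤ s) (hst : s ≤ t) (d : ℕ → ℕ)
    (hds : 1 ≤ d s ∧ d s ≤ m - 1) (hd : ∀ j, s + 1 ≤ j → j ≤ t → d j ≤ m - 1)
    (hn : n = ∑ j ∈ Icc s t, d j * m ^ j)
    (d₀ : ℕ) (hd₀ : d₀ ≤ m - 1) :
    (Nat.card {c : ℕ × ℕ →₀ ℕ //
        IsColouredMaryPartition m k (n - d₀) c ∧ WithoutGaps c} : ℤ)
      ≡ ((k 0 - 1 + (m - d₀)).choose (k 0 - 1) : ℤ)
          * ((if Even s then 0 else 1)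
            + (-1) ^ (s - 1) * (((k s + d s - 1).choose (k s) : ℤ) - 1)
              * ∑ i ∈ Icc s t, ∏ j ∈ Icc (s + 1) i, (((k j + d j).choose (k j) : ℤ) - 1))
        [ZMOD (m : ℤ)] := by
  classical
  have hd' := hds.1
  obtain ⟨a, rfl⟩ : ∃ a, s = a + 1 := ⟨s - 1, by omega⟩
  obtain ⟨r, rfl⟩ : ∃ r, t = a + 1 + r := ⟨t - (a + 1), by omega⟩
  -- `D` collects the digits above `d_s`, so that `n = m ^ s * (d_s + m * D)`.
  set D := ∑ j ∈ range r, d (j + (a + 2)) * m ^ j with hD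
  have hIcc : Icc (a + 1) (a + 1 + r) = Ico (a + 1) (a + 1 + (r + 1)) := by
    ext x
    simp only [mem_Icc, mem_Ico]
    omega
  have hnD : n = m * (m ^ a * (m * D + 1 + (d (a + 1) - 1))) := by
    rw [hn, hIcc, Finset.sum_Ico_eq_sum_range, Nat.add_sub_cancel_left, Finset.sum_range_succ',
      show m * D + 1 + (d (a + 1) - 1) = m * D + d (a + 1) by omega, hD, Finset.mul_sum, mul_add,
      mul_add, Finset.mul_sum, Finset.mul_sum]
    congr 1
    · refine Finset.sum_congr rfl fun j _ => ?_
      rw [show a + 1 + (j + 1) = j + (a + 2) by ring]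
      ring
    · rw [add_zero]
      ring
  have hM : 0 < m ^ a * (m * D + 1 + (d (a + 1) - 1)) := by positivity
  rw [← ZMod.intCast_eq_intCast_iff]
  have hcount := gfCount_mod hm k (hk 0) h0 (m ^ a * (m * D + 1 + (d (a + 1) - 1))) d₀ hM
    (by omega)
  rw [← hnD, gfSum_pow_mul hm _ (by omega) a (fun j => k (j + 1)) (fun j => hk _)
      (fun j => hj _ (by omega)),
    gfSum_step hm (fun j => k (j + a + 1)) (hk _) (hj _ (by omega)) D (d (a + 1) - 1) (by omega),
    hD,
    gfSum_digits hm r _ _ (fun j => hk _) (fun j => hj _ (by omega))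
      (fun j hjr => hd _ (by omega) (by omega))] at hcount
  have hsum : ∑ i ∈ Icc (a + 1) (a + 1 + r), ∏ j ∈ Icc (a + 1 + 1) i,
        (((k j + d j).choose (k j) : ZMod m) - 1) =
      ∑ i ∈ range (r + 1), ∏ j ∈ range i,
        (((k (j + 1 + a + 1) + d (j + (a + 2))).choose (k (j + 1 + a + 1)) : ZMod m) - 1) := by
    rw [hIcc, Finset.sum_Ico_eq_sum_range, Nat.add_sub_cancel_left]
    refine Finset.sum_congr rfl fun i _ => ?_
    have h1 : Icc (a + 1 + 1) (a + 1 + i) = Ico (a + 2) (a + 2 + i) := by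
      ext x
      simp only [mem_Icc, mem_Ico]
      omega
    rw [h1, Finset.prod_Ico_eq_prod_range, Nat.add_sub_cancel_left]
    refine Finset.prod_congr rfl fun j _ => ?_
    rw [show a + 2 + j = j + (a + 2) by ring, show j + 1 + a + 1 = j + (a + 2) by ring]
  change (((gfCount m k (n - d₀) : ℕ) : ℤ) : ZMod m) = _
  rw [Int.cast_natCast, hcount]
  push_cast
  rw [hsum]
  simp only [Nat.even_add_one, zero_add]
  rw [show k (a + 1) + d (a + 1) - 1 = k (a + 1) + (d (a + 1) - 1) by omega]
  congr 1
  by_cases hev : Even a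
  · simp only [hev, not_true_eq_false, if_true, if_false, hev.neg_one_pow]
    ring
  · simp only [hev, not_false_eq_true, if_true, if_false, (Nat.not_even_iff_odd.1 hev).neg_one_pow]
    ring
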